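/- Let p ≥ 5 be a prime such that the Legendre symbol (3/p) is not equal to the Legendre symbol (−5/p). Then for all nonnegative integers n and α, and for j ∈ {1, 3}, one has b'₅(4·p^(2α)·(5n+j) + (17·p^(2α)+1)/6) ≡ 0 (mod 4). (Note that 17·p^(2α)+1 is divisible by 6 since p² ≡ 1 (mod 6).) -/

import Mathlib

/-- `b5' n` is the number of partitions of `n` into distinct parts,
none of which is divisible by `5` (with `b5' 0 = 1`). -/
def b5' (n : ℕ) : ℕ :=
  ((Nat.Partition.distincts n).filter (fun p => ∀ i ∈ p.parts, ¬ (5 ∣ i))).card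

/-!
Modulo 2 the theta function `φ(q) = ∑ q ^ (k ^ 2)` is `1`, so that modulo 4 one has `φ ^ 2 = 1` and
`2 φ = 2`. Write `f_m = ∏ (1 - q ^ (m i))` and `ψ(q) = ∑ q ^ (2 k ^ 2 - k)`. The generating function
`G = f_2 f_5 / (f_1 f_10)` of `b5'` is, up to Euler products, a product of two theta functions to
which Jacobi's triple product applies, and splitting the lattice sum of `φ(q) ψ(q ^ 2)` according to
residues modulo 5 expresses it through `φ` and `ψ`. Modulo 4 the identities are simple enough for
two successive extractions of odd-indexed coefficients, which leave
`∑ b5' (4 K + 3) q ^ K ≡ 2 f_5 ψ(q ^ 4)`.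

By Euler's pentagonal number theorem, a nonzero coefficient at `q ^ K` on the right forces
`24 K + 17 = 12 x ^ 2 + 5 y ^ 2`. On the progressions in question `24 K + 17` is a square times an
integer congruent to `± 1` modulo 5, and since 2 is not a square modulo 5, infinite descent at 5
shows that such a number is never of this form.
-/

namespace QSeries

open Filter Finset PowerSeries Topology
open scoped PowerSeries.WithPiTopology

section GaussianBinomial

variable {R : Type*} [CommRing R] (q : R)

/-- The `q`-Pochhammer symbol `(q; q)_n`. -/
def qPochhammer (n : ℕ) : R := ∏ i ∈ range n, (1 - q ^ (i + 1))

/-- The Gaussian binomial coefficient, evaluated at the ring element `q`. It is defined by the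
`q`-Pascal recursion, so that no division is involved. -/
def qChoose : ℕ → ℕ → R
  | _, 0 => 1
  | 0, _ + 1 => 0
  | n + 1, k + 1 => qChoose n k + q ^ (k + 1) * qChoose n (k + 1)

theorem qPochhammer_succ (n : ℕ) :
    qPochhammer q (n + 1) = qPochhammer q n * (1 - q ^ (n + 1)) :=
  prod_range_succ _ _

theorem qChoose_zero_right (n : ℕ) : qChoose q n 0 = 1 := by
  cases n <;> rfl

theorem qChoose_succ_succ (n k : ℕ) :
    qChoose q (n + 1) (k + 1) = qChoose q n k + q ^ (k + 1) * qChoose q n (k + 1) :=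
  rfl

theorem qChoose_eq_zero_of_lt : ∀ {n k : ℕ}, n < k → qChoose q n k = 0
  | _, 0, h => absurd h (Nat.not_lt_zero _)
  | 0, _ + 1, _ => rfl
  | n + 1, k + 1, h => by
    rw [qChoose_succ_succ, qChoose_eq_zero_of_lt (by omega), qChoose_eq_zero_of_lt (by omega),
      mul_zero, add_zero]

theorem qChoose_self (n : ℕ) : qChoose q n n = 1 := by
  induction n with
  | zero => rfl
  | succ n ih => rw [qChoose_succ_succ, ih, qChoose_eq_zero_of_lt q n.lt_succ_self, mul_zero,
      add_zero]

theorem qChoose_mul_qPochhammer_mul_qPochhammer (a b : ℕ) :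
    qChoose q (a + b) a * qPochhammer q a * qPochhammer q b = qPochhammer q (a + b) := by
  induction a generalizing b with
  | zero => simp [qChoose_zero_right, qPochhammer]
  | succ a iha =>
    induction b with
    | zero => simp [qChoose_self, qPochhammer]
    | succ b ihb =>
      have ha : qChoose q (a + b + 1) a * qPochhammer q a * qPochhammer q (b + 1)
          = qPochhammer q (a + b + 1) := iha (b + 1)
      have hb : qChoose q (a + b + 1) (a + 1) * qPochhammer q (a + 1) * qPochhammer q b
          = qPochhammer q (a + b + 1) := by
        rwa [add_right_comm a 1 b] at ihb
      rw [show a + 1 + (b + 1) = a + b + 1 + 1 by ring, qChoose_succ_succ,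
        qPochhammer_succ q (a + b + 1)]
      rw [qPochhammer_succ q a] at hb ⊢
      rw [qPochhammer_succ q b] at ha ⊢
      linear_combination (1 - q ^ (a + 1)) * ha + q ^ (a + 1) * (1 - q ^ (b + 1)) * hb

theorem prod_range_add_mul_pow (x y : R) (n : ℕ) :
    ∏ i ∈ range n, (y + x * q ^ i)
      = ∑ k ∈ range (n + 1), q ^ k.choose 2 * qChoose q n k * x ^ k * y ^ (n - k) := by
  induction n generalizing x with
  | zero => simp [qChoose]
  | succ n ih =>
    set S := ∑ k ∈ range (n + 1), q ^ k.choose 2 * qChoose q n k * (x * q) ^ k * y ^ (n - k)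
      with hS
    have hprod : ∏ i ∈ range (n + 1), (y + x * q ^ i) = x * S + y * S := by
      rw [prod_range_succ', hS, ← ih (x * q)]
      simp only [pow_succ', pow_zero, mul_one, mul_assoc]
      ring
    have hx : x * S = ∑ k ∈ range (n + 1),
        q ^ (k + 1).choose 2 * qChoose q n k * x ^ (k + 1) * y ^ (n - k) := by
      rw [hS, mul_sum]
      refine sum_congr rfl fun k _ ↦ ?_
      rw [Nat.choose_succ_succ' k 1, Nat.choose_one_right]
      ring
    have hy : y * S = (∑ k ∈ range (n + 1), q ^ (k + 1).choose 2
        * (q ^ (k + 1) * qChoose q n (k + 1)) * x ^ (k + 1) * y ^ (n - k)) + y ^ (n + 1) := by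
      have hlast : qChoose q n (n + 1) = 0 := qChoose_eq_zero_of_lt q n.lt_succ_self
      rw [hS, sum_range_succ', mul_add, mul_sum, sum_range_succ _ n, hlast]
      congr 1
      · simp only [mul_zero, zero_mul, add_zero]
        refine sum_congr rfl fun k hk ↦ ?_
        obtain ⟨j, rfl⟩ := Nat.exists_eq_add_of_lt (mem_range.mp hk)
        rw [show k + j + 1 - k = j + 1 by omega, show k + j + 1 - (k + 1) = j by omega]
        ring
      · simp [qChoose_zero_right, pow_succ']
    rw [hprod, hx, hy, sum_range_succ' _ (n + 1), ← add_assoc, ← sum_add_distrib]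
    simp only [qChoose_succ_succ, qChoose_zero_right, Nat.add_sub_add_right, Nat.choose_zero_succ,
      pow_zero, one_mul, mul_one, Nat.sub_zero]
    congr 1
    exact sum_congr rfl fun k _ ↦ by ring

theorem prod_range_pow_add_mul_pow_add (x : R) (n : ℕ) :
    ∏ i ∈ range n, (q ^ n + x * q ^ (n + i)) = q ^ (n * n) * ∏ i ∈ range n, (1 + x * q ^ i) := by
  have h := pow_card_mul_prod (s := range n) (f := fun i ↦ 1 + x * q ^ i) (b := q ^ n)
  rw [card_range, ← pow_mul] at h
  exact (prod_congr rfl fun i _ ↦ by ring).trans h.symm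

variable {q} in
theorem prod_range_pow_add_mul_pow {x y : R} (hxy : x * y = q) (n : ℕ) :
    ∏ i ∈ range n, (q ^ n + x * q ^ i)
      = x ^ n * q ^ n.choose 2 * ∏ i ∈ range n, (1 + y * q ^ i) := by
  have hchoose : ∏ i ∈ range n, x * q ^ i = x ^ n * q ^ n.choose 2 := by
    rw [prod_mul_distrib, prod_const, card_range, prod_pow_eq_pow_sum, sum_range_id,
      Nat.choose_two_right]
  rw [← hchoose, ← prod_range_reflect (fun i ↦ 1 + y * q ^ i), ← prod_mul_distrib]
  refine prod_congr rfl fun i hi ↦ ?_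
  obtain ⟨j, rfl⟩ := Nat.exists_eq_add_of_lt (mem_range.mp hi)
  rw [show i + j + 1 - 1 - i = j by omega]
  linear_combination (-q ^ (i + j)) * hxy

variable {q} in
theorem pow_mul_prod_range_one_add_mul_one_add {x y : R} (hxy : x * y = q) (n : ℕ) :
    q ^ (n * n) * x ^ n * q ^ n.choose 2 * ∏ i ∈ range n, ((1 + x * q ^ i) * (1 + y * q ^ i))
      = ∑ k ∈ range (2 * n + 1),
        q ^ k.choose 2 * qChoose q (2 * n) k * x ^ k * (q ^ n) ^ (2 * n - k) := by
  rw [← prod_range_add_mul_pow, two_mul, prod_range_add, prod_range_pow_add_mul_pow hxy,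
    prod_range_pow_add_mul_pow_add, prod_mul_distrib]
  ring

theorem isCoprime_pow_qPochhammer (k n : ℕ) : IsCoprime (q ^ k) (qPochhammer q n) :=
  .pow_left <| .prod_right fun i _ ↦ ⟨q ^ i, 1, by ring⟩

theorem pow_dvd_qPochhammer_sub_qPochhammer {c m n : ℕ} (hm : c ≤ m) (hn : c ≤ n) :
    q ^ (c + 1) ∣ qPochhammer q m - qPochhammer q n := by
  have h : ∀ n, c ≤ n → q ^ (c + 1) ∣ qPochhammer q n - qPochhammer q c := by
    intro n hn
    induction n, hn using Nat.le_induction with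
    | base => simp
    | succ n hn ih =>
      rw [qPochhammer_succ, mul_sub, mul_one, sub_right_comm]
      exact dvd_sub ih (Dvd.dvd.mul_left (pow_dvd_pow q (by omega)) _)
  simpa using dvd_sub (h m hm) (h n hn)

theorem pow_dvd_qChoose_mul_qPochhammer_sub_one {a b c n : ℕ} (ha : c ≤ a) (hb : c ≤ b)
    (hn : c ≤ n) : q ^ (c + 1) ∣ qChoose q (a + b) a * qPochhammer q n - 1 := by
  apply (isCoprime_pow_qPochhammer q (c + 1) b).dvd_of_dvd_mul_right
  have h : (qChoose q (a + b) a * qPochhammer q n - 1) * qPochhammer q b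
      = qChoose q (a + b) a * qPochhammer q b * (qPochhammer q n - qPochhammer q a)
        + (qPochhammer q (a + b) - qPochhammer q b) := by
    linear_combination qChoose_mul_qPochhammer_mul_qPochhammer q a b
  rw [h]
  exact dvd_add (Dvd.dvd.mul_left (pow_dvd_qPochhammer_sub_qPochhammer q hn ha) _)
    (pow_dvd_qPochhammer_sub_qPochhammer q (by omega) hb)

end GaussianBinomial

section Products

variable {R : Type*} [CommRing R] [TopologicalSpace R]

/-- The infinite product `∏ (1 + z q ^ (m i + r))`, that is `(-z q ^ r; q ^ m)_∞`. -/
noncomputable def progressionProd (z : R) (m r : ℕ) : R⟦X⟧ := ∏' i : ℕ, (1 + C z * X ^ (m * i + r))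

variable (R) in
/-- The Euler product `f_m = (q ^ m; q ^ m)_∞`. -/
noncomputable def eulerProd (m : ℕ) : R⟦X⟧ := progressionProd (-1) m m

theorem hasProd_progressionProd (z : R) (m r : ℕ) [NeZero m] :
    HasProd (fun i : ℕ ↦ 1 + C z * X ^ (m * i + r)) (progressionProd z m r) := by
  refine (WithPiTopology.multipliable_one_add_of_tendsto_order_atTop_nhds_top R ?_).hasProd
  refine tendsto_nhds_top_mono ENat.tendsto_natCast_nhds_top (.of_forall fun n ↦ le_order _ _ ?_)
  intro i hi
  have hi' : i < m * n + r :=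
    (Nat.cast_lt.mp hi).trans_le (Nat.le_add_right_of_le (Nat.le_mul_of_pos_left n (NeZero.pos m)))
  rw [coeff_C_mul, coeff_X_pow, if_neg hi'.ne, mul_zero]

theorem continuous_expand (m : ℕ) (hm : m ≠ 0) : Continuous (expand m hm : R⟦X⟧ → R⟦X⟧) := by
  refine continuous_iff_continuousAt.mpr fun F ↦ ?_
  rw [ContinuousAt, WithPiTopology.tendsto_iff_coeff_tendsto]
  intro d
  simp only [coeff_expand]
  split_ifs
  · exact (WithPiTopology.continuous_coeff R (d / m)).continuousAt
  · exact tendsto_const_nhds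

variable [T2Space R]

theorem expand_progressionProd (z : R) (k m r : ℕ) [NeZero k] [NeZero m] :
    expand k (NeZero.ne k) (progressionProd z m r) = progressionProd z (k * m) (k * r) := by
  refine ((hasProd_progressionProd z m r).map _ (continuous_expand k (NeZero.ne k))).unique ?_
  convert hasProd_progressionProd z (k * m) (k * r) using 2 with i
  simp [expand_C, ← pow_mul, mul_add, mul_assoc]

theorem expand_eulerProd (k m : ℕ) [NeZero k] [NeZero m] :
    expand k (NeZero.ne k) (eulerProd R m) = eulerProd R (k * m) :=
  expand_progressionProd (-1) k m m

theorem eulerProd_eq_expand_pentagonalSeries (m : ℕ) [NeZero m] :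
    eulerProd R m = expand m (NeZero.ne m) (pentagonalSeries R) := by
  have h : eulerProd R 1 = pentagonalSeries R := by
    refine (hasProd_progressionProd (-1) 1 1).unique ?_
    simpa [← sub_eq_add_neg] using WithPiTopology.hasProd_one_sub_X_pow R
  rw [← h, expand_eulerProd, mul_one]

theorem constantCoeff_eulerProd (m : ℕ) [NeZero m] : constantCoeff (eulerProd R m) = 1 := by
  rw [eulerProd_eq_expand_pentagonalSeries, constantCoeff_expand,
    ← coeff_zero_eq_constantCoeff_apply]
  simpa [pentagonal_def] using coeff_pentagonalSeries_pentagonal R 0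

theorem isUnit_eulerProd (m : ℕ) [NeZero m] : IsUnit (eulerProd R m) := by
  rw [isUnit_iff_constantCoeff, constantCoeff_eulerProd]
  exact isUnit_one

variable [IsTopologicalRing R]

theorem progressionProd_eq_prod_residues (z : R) (k m r : ℕ) [NeZero k] [NeZero m] :
    progressionProd z m r = ∏ i ∈ range k, progressionProd z (k * m) (m * i + r) := by
  have h := (Nat.divModEquiv k).symm.hasProd_iff.mpr (hasProd_progressionProd z m r)
  rw [← (Equiv.prodComm _ _).hasProd_iff] at h
  have hfiber (i : Fin k) : HasProd (fun j : ℕ ↦ 1 + C z * X ^ (m * (j * k + i) + r))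
      (progressionProd z (k * m) (m * i + r)) := by
    convert hasProd_progressionProd z (k * m) (m * i + r) using 4
    ring
  rw [← Fin.prod_univ_eq_prod_range (fun i ↦ progressionProd z (k * m) (m * i + r)) k]
  exact (h.prod_fiberwise hfiber).unique (hasProd_fintype _)

theorem progressionProd_mul_progressionProd_neg (z : R) (m r : ℕ) [NeZero m] :
    progressionProd z m r * progressionProd (-z) m r
      = progressionProd (-z ^ 2) (2 * m) (2 * r) := by
  refine ((hasProd_progressionProd z m r).mul (hasProd_progressionProd (-z) m r)).unique ?_
  convert hasProd_progressionProd (-z ^ 2) (2 * m) (2 * r) using 2 with i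
  simp only [map_neg, map_pow]
  ring

theorem progressionProd_one_mul_eulerProd (m : ℕ) [NeZero m] :
    progressionProd (1 : R) m m * eulerProd R m = eulerProd R (2 * m) := by
  rw [eulerProd, progressionProd_mul_progressionProd_neg, one_pow, eulerProd]

end Products

section Theta

/-- The exponent `a k (k + 1) / 2 + b k (k - 1) / 2` of Ramanujan's theta function. -/
def thetaExp (a b : ℕ) (k : ℤ) : ℕ := a * (k * (k + 1) / 2).toNat + b * (k * (k - 1) / 2).toNat

theorem mul_add_one_nonneg (k : ℤ) : 0 ≤ k * (k + 1) := by
  nlinarith [Int.le_self_sq (-k)]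

theorem two_mul_natCast_thetaExp (a b : ℕ) (k : ℤ) :
    2 * (thetaExp a b k : ℤ) = a * (k * (k + 1)) + b * (k * (k - 1)) := by
  have triangular (l : ℤ) : 2 * ((l * (l + 1) / 2).toNat : ℤ) = l * (l + 1) := by
    rw [Int.toNat_of_nonneg (Int.ediv_nonneg (mul_add_one_nonneg l) zero_le_two),
      Int.mul_ediv_cancel' (Int.even_mul_succ_self l).two_dvd]
  have hpred := triangular (k - 1)
  rw [sub_add_cancel, mul_comm (k - 1)] at hpred
  rw [thetaExp]
  push_cast
  linear_combination (a : ℤ) * triangular k + b * hpred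

theorem natAbs_le_thetaExp (a b : ℕ) [NeZero a] [NeZero b] (k : ℤ) : k.natAbs ≤ thetaExp a b k := by
  have ha : (1 : ℤ) ≤ a := by exact_mod_cast NeZero.one_le (n := a)
  have hb : (1 : ℤ) ≤ b := by exact_mod_cast NeZero.one_le (n := b)
  have hsucc : 0 ≤ k * (k + 1) := mul_add_one_nonneg k
  have hpred : 0 ≤ k * (k - 1) := by linarith [mul_add_one_nonneg (k - 1)]
  have hexp : k ^ 2 ≤ thetaExp a b k := by nlinarith [two_mul_natCast_thetaExp a b k]
  zify
  exact abs_le.mpr ⟨by linarith, by linarith⟩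

theorem two_mul_natCast_choose_two (n : ℕ) : 2 * (n.choose 2 : ℤ) = n * (n - 1) := by
  induction n with
  | zero => simp
  | succ n ih =>
    rw [Nat.choose_succ_succ' n 1, Nat.choose_one_right]
    push_cast
    linarith

theorem choose_two_add_eq_thetaExp_add (a b N : ℕ) {k l : ℕ} (h : k + l = 2 * N) :
    (a + b) * k.choose 2 + a * k + (a + b) * N * l
      = thetaExp a b (k - N) + (a + b) * N * N + (a * N + (a + b) * N.choose 2) := by
  have hl : (l : ℤ) = 2 * N - k := by omega
  have hk := two_mul_natCast_choose_two k
  have hN := two_mul_natCast_choose_two N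
  have hexp := two_mul_natCast_thetaExp a b (k - N)
  zify
  refine mul_left_cancel₀ two_ne_zero ?_
  rw [hl]
  linear_combination ((a : ℤ) + b) * hk - hexp - ((a : ℤ) + b) * hN

theorem thetaExp_mul_mul (c a b : ℕ) (k : ℤ) :
    thetaExp (c * a) (c * b) k = c * thetaExp a b k := by
  simp only [thetaExp]
  ring

theorem finite_setOf_thetaExp_le (a b : ℕ) [NeZero a] [NeZero b] (n : ℕ) :
    {k : ℤ | thetaExp a b k ≤ n}.Finite := by
  refine (Set.finite_Icc (-n : ℤ) n).subset fun k hk ↦ ?_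
  have hk' : k.natAbs ≤ n := (natAbs_le_thetaExp a b k).trans hk
  constructor <;> omega

variable {R : Type*} [CommRing R]

theorem prod_range_one_add_mul_one_add (z : Rˣ) (a b N : ℕ) :
    ∏ i ∈ range N, ((1 + C (z : R) * X ^ ((a + b) * i + a))
        * (1 + C (↑z⁻¹ : R) * X ^ ((a + b) * i + b)))
      = ∑ k ∈ range (2 * N + 1), qChoose (X ^ (a + b)) (2 * N) k
        * (C (↑(z ^ (k - N : ℤ)) : R) * X ^ thetaExp a b (k - N)) := by
  have hxy : C (z : R) * X ^ a * (C (↑z⁻¹ : R) * X ^ b) = X ^ (a + b) := by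
    rw [mul_mul_mul_comm, ← map_mul, Units.mul_inv, map_one, one_mul, pow_add]
  have hterm (w : R) (r i : ℕ) :
      C w * X ^ ((a + b) * i + r) = C w * X ^ r * (X ^ (a + b)) ^ i := by
    ring
  have hunit : IsUnit (C (z : R) ^ N) := (z.isUnit.map C).pow N
  apply hunit.mul_left_cancel
  apply X_pow_mul_cancel (k := (a + b) * N * N + (a * N + (a + b) * N.choose 2))
  simp only [hterm]
  refine (Eq.trans ?_ (pow_mul_prod_range_one_add_mul_one_add hxy N)).trans ?_
  · ring
  rw [mul_sum, mul_sum]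
  refine sum_congr rfl fun k hk ↦ ?_
  obtain ⟨l, hl⟩ := Nat.exists_eq_add_of_le (Nat.lt_succ_iff.mp (mem_range.mp hk))
  have hzpow : C (z : R) ^ k = C (z : R) ^ N * C (↑(z ^ (k - N : ℤ)) : R) := by
    rw [← map_pow, ← map_pow, ← map_mul, ← Units.val_pow_eq_pow_val, ← Units.val_pow_eq_pow_val,
      ← Units.val_mul, ← zpow_natCast, ← zpow_natCast, ← zpow_add, add_sub_cancel]
  have hXpow := congrArg (fun e ↦ (X : R⟦X⟧) ^ e) (choose_two_add_eq_thetaExp_add a b N hl.symm)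
  rw [mul_pow, hzpow, show 2 * N - k = l by omega]
  simp only [pow_add, pow_mul] at hXpow ⊢
  linear_combination
    qChoose (X ^ a * X ^ b) (2 * N) k * C (z : R) ^ N * C (↑(z ^ (k - N : ℤ)) : R) * hXpow

theorem X_pow_dvd_qPochhammer_mul_prod_sub_sum (z : Rˣ) (a b : ℕ) [NeZero a] [NeZero b] (N : ℕ) :
    X ^ (N + 1) ∣ qPochhammer (X ^ (a + b)) N * ∏ i ∈ range N,
        ((1 + C (z : R) * X ^ ((a + b) * i + a)) * (1 + C (↑z⁻¹ : R) * X ^ ((a + b) * i + b)))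
      - ∑ k ∈ Icc (-N : ℤ) N, C (↑(z ^ k) : R) * X ^ thetaExp a b k := by
  have hreindex : ∑ k ∈ Icc (-N : ℤ) N, C (↑(z ^ k) : R) * X ^ thetaExp a b k
      = ∑ k ∈ range (2 * N + 1), C (↑(z ^ (k - N : ℤ)) : R) * X ^ thetaExp a b (k - N) := by
    symm
    refine sum_nbij' (fun k ↦ (k : ℤ) - N) (fun k ↦ (k + N).toNat) ?_ ?_ ?_ ?_ fun _ _ ↦ rfl
    all_goals simp only [mem_range, mem_Icc]; omega
  rw [prod_range_one_add_mul_one_add, hreindex, mul_sum, ← sum_sub_distrib]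
  refine dvd_sum fun k hk ↦ ?_
  obtain ⟨l, hl⟩ := Nat.exists_eq_add_of_le (Nat.lt_succ_iff.mp (mem_range.mp hk))
  set c := N - (k - N : ℤ).natAbs
  have hcoeff : (X : R⟦X⟧) ^ (c + 1)
      ∣ qChoose (X ^ (a + b)) (2 * N) k * qPochhammer (X ^ (a + b)) N - 1 := by
    rw [hl]
    refine (pow_dvd_pow_of_dvd (dvd_pow_self X (NeZero.ne (a + b))) _).trans ?_
    exact pow_dvd_qChoose_mul_qPochhammer_sub_one _ (by omega) (by omega) (by omega)
  have hexp := natAbs_le_thetaExp a b (k - N)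
  refine (pow_dvd_pow X (show N + 1 ≤ (c + 1) + thetaExp a b (k - N) by omega)).trans ?_
  rw [pow_add]
  convert mul_dvd_mul hcoeff (dvd_mul_left (X ^ thetaExp a b (k - N)) (C (↑(z ^ (k - N : ℤ)) : R)))
    using 1
  ring

variable [TopologicalSpace R]

theorem summable_C_mul_X_pow {ι : Type*} (c : ι → R) {e : ι → ℕ} (he : ∀ n, {i | e i = n}.Finite) :
    Summable fun i ↦ C (c i) * X ^ e i := by
  refine (WithPiTopology.summable_iff_summable_coeff R).mpr fun d ↦ ?_
  refine summable_of_hasFiniteSupport ((he d).subset fun i hi ↦ ?_)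
  by_contra hne
  refine hi ?_
  change coeff d (C (c i) * X ^ e i) = 0
  rw [coeff_C_mul, coeff_X_pow, if_neg fun h ↦ hne h.symm, mul_zero]

theorem tendsto_zero_of_X_pow_dvd {s : ℕ → R⟦X⟧} (h : ∀ n, X ^ (n + 1) ∣ s n) :
    Tendsto s atTop (𝓝 0) := by
  refine (WithPiTopology.tendsto_iff_coeff_tendsto R _ _ _).mpr fun d ↦ ?_
  refine tendsto_atTop_of_eventually_const (i₀ := d) fun n hn ↦ ?_
  rw [map_zero]
  exact X_pow_dvd_iff.mp (h n) d (by omega)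

/-- Ramanujan's theta function `∑ z ^ k q ^ (a k (k + 1) / 2 + b k (k - 1) / 2)`. -/
noncomputable def theta (z : Rˣ) (a b : ℕ) : R⟦X⟧ :=
  ∑' k : ℤ, C (↑(z ^ k) : R) * X ^ thetaExp a b k

theorem hasSum_theta (z : Rˣ) (a b : ℕ) [NeZero a] [NeZero b] :
    HasSum (fun k : ℤ ↦ C (↑(z ^ k) : R) * X ^ thetaExp a b k) (theta z a b) :=
  (summable_C_mul_X_pow _ fun n ↦
    (finite_setOf_thetaExp_le a b n).subset fun _ ↦ le_of_eq).hasSum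

variable [T2Space R]

theorem expand_theta (z : Rˣ) (k a b : ℕ) [NeZero k] [NeZero a] [NeZero b] :
    expand k (NeZero.ne k) (theta z a b) = theta z (k * a) (k * b) := by
  refine ((hasSum_theta z a b).map _ (continuous_expand k (NeZero.ne k))).unique ?_
  convert hasSum_theta z (k * a) (k * b) using 2 with i
  simp [expand_C, ← pow_mul, thetaExp_mul_mul]

theorem exists_thetaExp_eq_of_coeff_theta_ne_zero (z : Rˣ) {a b : ℕ} [NeZero a] [NeZero b] {d : ℕ}
    (h : coeff d (theta z a b) ≠ 0) : ∃ k, thetaExp a b k = d := by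
  contrapose! h
  refine ((hasSum_theta z a b).map (coeff d) (WithPiTopology.continuous_coeff R d)).unique ?_
  convert hasSum_zero using 2 with k
  rw [Function.comp_apply, coeff_C_mul, coeff_X_pow, if_neg (h k).symm, mul_zero]

variable [IsTopologicalRing R]

theorem jacobi_triple_product (z : Rˣ) (a b : ℕ) [NeZero a] [NeZero b] :
    theta z a b = eulerProd R (a + b) * progressionProd (z : R) (a + b) a
      * progressionProd (↑z⁻¹ : R) (a + b) b := by
  have hsum : Tendsto (fun N : ℕ ↦ ∑ k ∈ Icc (-N : ℤ) N, C (↑(z ^ k) : R) * X ^ thetaExp a b k)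
      atTop (𝓝 (theta z a b)) :=
    SummationFilter.hasSum_symmetricIcc_iff.mp
      ((hasSum_theta z a b).mono_left (SummationFilter.LeAtTop.le_atTop))
  have hpochhammer : Tendsto (qPochhammer ((X : R⟦X⟧) ^ (a + b))) atTop
      (𝓝 (eulerProd R (a + b))) := by
    rw [eulerProd]
    convert (hasProd_progressionProd (-1 : R) (a + b) (a + b)).tendsto_prod_nat using 2 with N
    refine prod_congr rfl fun i _ ↦ ?_
    rw [map_neg, map_one]
    ring
  have hprod := ((hasProd_progressionProd (z : R) (a + b) a).mul
    (hasProd_progressionProd (↑z⁻¹ : R) (a + b) b)).tendsto_prod_nat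
  have hdiff := tendsto_zero_of_X_pow_dvd (X_pow_dvd_qPochhammer_mul_prod_sub_sum z a b)
  have hlim := ((hpochhammer.mul hprod).sub hdiff)
  simp only [sub_sub_cancel, sub_zero] at hlim
  rw [mul_assoc]
  exact tendsto_nhds_unique hsum hlim

end Theta

section ThetaIdentities

theorem hasSum_add_of_isCompl_range {ι κ lam M : Type*} [AddCommMonoid M] [TopologicalSpace M]
    [ContinuousAdd M] {s : ι → M} {g : κ → ι} {h : lam → ι} {x y : M} (hg : g.Injective)
    (hh : h.Injective) (hgh : IsCompl (Set.range g) (Set.range h)) (hx : HasSum (s ∘ g) x)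
    (hy : HasSum (s ∘ h) y) : HasSum s (x + y) :=
  (hg.hasSum_range_iff.mpr hx).add_isCompl hgh (hh.hasSum_range_iff.mpr hy)

theorem hasSum_int_of_two_mul_of_four_mul {M : Type*} [AddCommMonoid M] [TopologicalSpace M]
    [ContinuousAdd M] {s : ℤ → M} {x y w : M} (hx : HasSum (fun k ↦ s (2 * k)) x)
    (hy : HasSum (fun k ↦ s (4 * k - 1)) y) (hw : HasSum (fun k ↦ s (1 - 4 * k)) w) :
    HasSum s (x + (y + w)) := by
  refine hasSum_add_of_isCompl_range (g := fun k : ℤ ↦ 2 * k)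
    (h := Sum.elim (fun k : ℤ ↦ 4 * k - 1) (fun k ↦ 1 - 4 * k)) ?_ ?_ ?_ hx (HasSum.sum hy hw)
  · exact mul_right_injective₀ two_ne_zero
  · rintro (k | k) (l | l) hkl <;> grind
  · refine eq_compl_iff_isCompl.mp (Set.ext fun k ↦ ?_)
    simp only [Set.Sum.elim_range, Set.mem_compl_iff, Set.mem_union, Set.mem_range, not_or,
      not_exists]
    refine ⟨?_, fun h ↦ ⟨k / 2, ?_⟩⟩
    · rintro ⟨l, rfl⟩
      constructor <;> omega
    · have := h.1 ((k + 1) / 4)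
      have := h.2 ((1 - k) / 4)
      omega

variable (R : Type*) [CommRing R] [TopologicalSpace R]

/-- Ramanujan's theta function `φ(q ^ m) = ∑ q ^ (m k ^ 2)`. -/
noncomputable def phi (m : ℕ) : R⟦X⟧ := theta 1 m m

/-- Ramanujan's theta function `ψ(q ^ m) = ∑ q ^ (m (2 k ^ 2 - k))`, with `k` ranging over
all integers. -/
noncomputable def psi (m : ℕ) : R⟦X⟧ := theta 1 m (3 * m)

variable [T2Space R]

theorem expand_phi (k m : ℕ) [NeZero k] [NeZero m] :
    expand k (NeZero.ne k) (phi R m) = phi R (k * m) :=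
  expand_theta 1 k m m

theorem expand_psi (k m : ℕ) [NeZero k] [NeZero m] :
    expand k (NeZero.ne k) (psi R m) = psi R (k * m) := by
  rw [psi, expand_theta, psi, mul_left_comm]

variable [IsTopologicalRing R]

theorem eulerProd_sq (m : ℕ) [NeZero m] :
    eulerProd R m ^ 2 = theta (-1) m m * eulerProd R (2 * m) := by
  have hsplit := progressionProd_eq_prod_residues (-1 : R) 2 m m
  rw [prod_range_succ, prod_range_one, mul_zero, zero_add, mul_one, ← two_mul] at hsplit
  rw [jacobi_triple_product, inv_neg_one, Units.val_neg, Units.val_one, ← two_mul]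
  simp only [eulerProd, hsplit]
  ring

theorem psi_mul_eulerProd (m : ℕ) [NeZero m] :
    psi R m * eulerProd R m = eulerProd R (2 * m) ^ 2 := by
  have hsplit := progressionProd_eq_prod_residues (1 : R) 2 (2 * m) m
  have hone := progressionProd_eq_prod_residues (1 : R) 2 m m
  simp only [prod_range_succ, prod_range_zero, one_mul, mul_zero, mul_one, zero_add] at hsplit hone
  have hfour : eulerProd R (2 * (2 * m)) = _ := (progressionProd_one_mul_eulerProd (2 * m)).symm
  have htwo := progressionProd_one_mul_eulerProd (R := R) m
  rw [psi, jacobi_triple_product, inv_one, Units.val_one, show m + 3 * m = 2 * (2 * m) by ring,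
    hfour]
  rw [← two_mul] at hone
  rw [show 2 * m + m = 3 * m by ring] at hsplit
  rw [hone, hsplit] at htwo
  linear_combination eulerProd R (2 * m) * htwo

theorem thetaExp_self (m : ℕ) (k : ℤ) : (thetaExp m m k : ℤ) = m * k ^ 2 := by
  refine mul_left_cancel₀ two_ne_zero ?_
  rw [two_mul_natCast_thetaExp]
  ring

theorem exists_phi_add_one_eq_two_mul (m : ℕ) [NeZero m] : ∃ s, phi R m + 1 = 2 * s := by
  have heven (k : ℤ) : thetaExp m m (-k) = thetaExp m m k := by
    zify
    rw [thetaExp_self, thetaExp_self, neg_sq]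
  have hsum := (hasSum_theta (1 : Rˣ) m m).nat_add_neg
  simp only [one_zpow, Units.val_one, map_one, one_mul, heven, ← two_mul] at hsum
  have hfinite (n : ℕ) : {k : ℕ | thetaExp m m k = n}.Finite :=
    ((finite_setOf_thetaExp_le m m n).preimage Nat.cast_injective.injOn).subset fun _ ↦ le_of_eq
  have hsummable := summable_C_mul_X_pow (fun _ ↦ (1 : R)) hfinite
  simp only [map_one, one_mul] at hsummable
  refine ⟨_, Eq.trans ?_ (hsum.unique (hsummable.hasSum.mul_left 2))⟩
  simp [thetaExp, phi]

variable {R} in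
theorem theta_eq_phi_add_psi {z : Rˣ} (hz : z * z = 1) (m : ℕ) [NeZero m] :
    theta z m m = phi R (4 * m) + 2 * (C (z : R) * X ^ m * psi R (8 * m)) := by
  have hzeven (k : ℤ) : z ^ (2 * k) = 1 := by
    rw [zpow_mul, zpow_two, hz, one_zpow]
  have hzodd (k : ℤ) : z ^ (2 * k + 1) = z := by
    rw [zpow_add_one, hzeven, one_mul]
  have hpsi {e : ℤ → ℤ} (he : ∀ k, e k = 4 * k - 1 ∨ e k = 1 - 4 * k) :
      HasSum (fun k ↦ C (↑(z ^ e k) : R) * X ^ thetaExp m m (e k))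
        (C (z : R) * X ^ m * psi R (8 * m)) := by
    rw [psi]
    refine ((hasSum_theta (1 : Rˣ) (8 * m) (3 * (8 * m))).mul_left (C (z : R) * X ^ m)).congr_fun
      fun k ↦ ?_
    have hexp : thetaExp m m (e k) = m + thetaExp (8 * m) (3 * (8 * m)) k := by
      zify
      refine mul_left_cancel₀ two_ne_zero ?_
      rw [mul_add, thetaExp_self, two_mul_natCast_thetaExp]
      push_cast
      rcases he k with h | h <;> rw [h] <;> ring
    obtain ⟨l, hl⟩ : ∃ l, e k = 2 * l + 1 := ⟨e k / 2, by have := he k; omega⟩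
    rw [hexp, hl, hzodd, one_zpow, Units.val_one, map_one, one_mul, pow_add, mul_assoc]
  refine (hasSum_theta z m m).unique ?_
  rw [two_mul]
  refine hasSum_int_of_two_mul_of_four_mul ?_ (hpsi fun k ↦ .inl rfl) (hpsi fun k ↦ .inr rfl)
  rw [phi]
  convert hasSum_theta (1 : Rˣ) (4 * m) (4 * m) using 2 with k
  have hexp : thetaExp m m (2 * k) = thetaExp (4 * m) (4 * m) k := by
    zify
    rw [thetaExp_self, thetaExp_self]
    push_cast
    ring
  rw [hexp, hzeven, one_zpow]

variable {R} in
theorem hasSum_theta_mul_theta (z w : Rˣ) (a b c d : ℕ) [NeZero a] [NeZero b] [NeZero c]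
    [NeZero d] :
    HasSum (fun k : ℤ × ℤ ↦ C (↑(z ^ k.1 * w ^ k.2) : R)
        * X ^ (thetaExp a b k.1 + thetaExp c d k.2)) (theta z a b * theta w c d) := by
  have hterm (k : ℤ × ℤ) : C (↑(z ^ k.1 * w ^ k.2) : R)
        * X ^ (thetaExp a b k.1 + thetaExp c d k.2)
      = C (↑(z ^ k.1) : R) * X ^ thetaExp a b k.1
        * (C (↑(w ^ k.2) : R) * X ^ thetaExp c d k.2) := by
    rw [Units.val_mul, map_mul, pow_add]
    ring
  have hfinite (n : ℕ) : {k : ℤ × ℤ | thetaExp a b k.1 + thetaExp c d k.2 = n}.Finite := by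
    refine ((finite_setOf_thetaExp_le a b n).prod (finite_setOf_thetaExp_le c d n)).subset ?_
    rintro k rfl
    exact ⟨Nat.le_add_right _ _, Nat.le_add_left _ _⟩
  have hsummable := summable_C_mul_X_pow (fun k : ℤ × ℤ ↦ (↑(z ^ k.1 * w ^ k.2) : R)) hfinite
  exact ((hasSum_theta z a b).mul (hasSum_theta w c d) (hsummable.congr hterm)).congr_fun hterm

/-- For `a + b` odd, the pair `(s, t)` such that `2 s + (4 t - 1) i` is an associate of the Gaussian
integer `a + b i`. -/
def primaryAssociate (a b : ℤ) : ℤ × ℤ :=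
  if 2 ∣ a then if 4 ∣ b + 1 then (a / 2, (b + 1) / 4) else (-a / 2, (1 - b) / 4)
  else if 4 ∣ a + 1 then (-b / 2, (a + 1) / 4) else (b / 2, (1 - a) / 4)

theorem primaryAssociate_eq_iff {a b s t : ℤ} (h : ¬ 2 ∣ a + b) :
    primaryAssociate a b = (s, t) ↔ 2 * s = a ∧ 4 * t - 1 = b ∨ 2 * s = -a ∧ 4 * t - 1 = -b ∨
      2 * s = -b ∧ 4 * t - 1 = a ∨ 2 * s = b ∧ 4 * t - 1 = -a := by
  unfold primaryAssociate
  split_ifs <;> rw [Prod.mk.injEq] <;> omega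

theorem four_mul_sq_add_sq_primaryAssociate {a b : ℤ} (h : ¬ 2 ∣ a + b) :
    4 * (primaryAssociate a b).1 ^ 2 + (4 * (primaryAssociate a b).2 - 1) ^ 2
      = a ^ 2 + b ^ 2 := by
  rw [show (4 : ℤ) = 2 ^ 2 by norm_num, ← mul_pow, show (2 : ℤ) ^ 2 = 4 by norm_num]
  obtain ⟨hs, ht⟩ | ⟨hs, ht⟩ | ⟨hs, ht⟩ | ⟨hs, ht⟩ :=
    (primaryAssociate_eq_iff h).mp (Prod.mk.eta (p := primaryAssociate a b)).symm
  · rw [hs, ht]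
  all_goals rw [hs, ht]; ring

/-- The parametrization of the pairs `(s, t)` with `s ≢ t + 1 (mod 5)`. It comes from
`(1 - 3 x - y) + (3 y - x) i = 1 - (3 + i) (x - y i)` and `N (3 + i) = 10`. -/
def dissectionLeft (k : ℤ × ℤ) : ℤ × ℤ := primaryAssociate (1 - 3 * k.1 - k.2) (3 * k.2 - k.1)

/-- The parametrization of the pairs `(s, t)` with `s ≡ t + 1 (mod 5)`. -/
def dissectionRight (k : ℤ × ℤ) : ℤ × ℤ := (k.1 - 4 * k.2 + 1, k.1 + k.2)

theorem dissectionLeft_eq_iff {k : ℤ × ℤ} {s t : ℤ} :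
    dissectionLeft k = (s, t) ↔
      2 * s = 1 - 3 * k.1 - k.2 ∧ 4 * t - 1 = 3 * k.2 - k.1 ∨
      2 * s = -(1 - 3 * k.1 - k.2) ∧ 4 * t - 1 = -(3 * k.2 - k.1) ∨
      2 * s = -(3 * k.2 - k.1) ∧ 4 * t - 1 = 1 - 3 * k.1 - k.2 ∨
      2 * s = 3 * k.2 - k.1 ∧ 4 * t - 1 = -(1 - 3 * k.1 - k.2) :=
  primaryAssociate_eq_iff (by omega)

theorem injective_dissectionLeft : dissectionLeft.Injective := by
  intro k l h
  have hk := dissectionLeft_eq_iff.mp (Prod.mk.eta (p := dissectionLeft k)).symm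
  have hl := dissectionLeft_eq_iff.mp (h.symm.trans Prod.mk.eta.symm)
  refine Prod.ext ?_ ?_ <;> omega

theorem injective_dissectionRight : dissectionRight.Injective := by
  intro k l h
  rw [dissectionRight, dissectionRight, Prod.mk.injEq] at h
  refine Prod.ext ?_ ?_ <;> omega

theorem mem_range_dissectionRight {s t : ℤ} :
    (s, t) ∈ Set.range dissectionRight ↔ 5 ∣ s - t - 1 := by
  refine ⟨?_, fun h ↦ ?_⟩
  · rintro ⟨k, hk⟩
    rw [dissectionRight, Prod.mk.injEq] at hk
    omega
  · obtain ⟨c, hc⟩ := h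
    exact ⟨(t + c, -c), Prod.ext (by simp only [dissectionRight]; omega)
      (by simp only [dissectionRight]; omega)⟩

theorem mem_range_dissectionLeft {s t : ℤ} :
    (s, t) ∈ Set.range dissectionLeft ↔ ¬ 5 ∣ s - t - 1 := by
  refine ⟨?_, fun h ↦ ?_⟩
  · rintro ⟨k, hk⟩
    rw [dissectionLeft_eq_iff] at hk
    omega
  · -- One of the four associates of `2 s + (4 t - 1) i` is congruent to 1 modulo `2 - i`.
    obtain ⟨a, b, hab, hassoc⟩ : ∃ a b : ℤ, (a + 2 * b) % 5 = 1 ∧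
        (2 * s = a ∧ 4 * t - 1 = b ∨ 2 * s = -a ∧ 4 * t - 1 = -b ∨
          2 * s = -b ∧ 4 * t - 1 = a ∨ 2 * s = b ∧ 4 * t - 1 = -a) := by
      obtain h | h | h | h : (s - t - 1) % 5 = 1 ∨ (s - t - 1) % 5 = 2 ∨ (s - t - 1) % 5 = 3 ∨
        (s - t - 1) % 5 = 4 := by omega
      · exact ⟨4 * t - 1, -(2 * s), by omega, by omega⟩
      · exact ⟨-(2 * s), -(4 * t - 1), by omega, by omega⟩
      · exact ⟨2 * s, 4 * t - 1, by omega, by omega⟩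
      · exact ⟨-(4 * t - 1), 2 * s, by omega, by omega⟩
    refine ⟨((3 - 3 * a - b) / 10, (1 - a + 3 * b) / 10), dissectionLeft_eq_iff.mpr ?_⟩
    have hodd : (a + b) % 2 = 1 := by omega
    have ha : 1 - 3 * ((3 - 3 * a - b) / 10) - (1 - a + 3 * b) / 10 = a := by omega
    have hb : 3 * ((1 - a + 3 * b) / 10) - (3 - 3 * a - b) / 10 = b := by omega
    rwa [ha, hb]

theorem isCompl_range_dissection :
    IsCompl (Set.range dissectionLeft) (Set.range dissectionRight) :=
  eq_compl_iff_isCompl.mp <| Set.ext fun ⟨_, _⟩ ↦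
    mem_range_dissectionLeft.trans mem_range_dissectionRight.not.symm

theorem thetaExp_dissectionLeft (m : ℕ) (k : ℤ × ℤ) :
    thetaExp m m (dissectionLeft k).1 + thetaExp (2 * m) (3 * (2 * m)) (dissectionLeft k).2
      = thetaExp m (4 * m) k.1 + thetaExp (2 * m) (3 * m) k.2 := by
  zify
  have hnorm : 4 * (dissectionLeft k).1 ^ 2 + (4 * (dissectionLeft k).2 - 1) ^ 2
      = (1 - 3 * k.1 - k.2) ^ 2 + (3 * k.2 - k.1) ^ 2 :=
    four_mul_sq_add_sq_primaryAssociate (by omega)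
  refine mul_left_cancel₀ two_ne_zero ?_
  simp only [mul_add, two_mul_natCast_thetaExp]
  push_cast
  refine mul_left_cancel₀ two_ne_zero ?_
  linear_combination (m : ℤ) * hnorm

theorem thetaExp_dissectionRight (m : ℕ) (k : ℤ × ℤ) :
    thetaExp m m (dissectionRight k).1 + thetaExp (2 * m) (3 * (2 * m)) (dissectionRight k).2
      = m + (thetaExp (5 * m) (5 * m) k.1 + thetaExp (10 * m) (3 * (10 * m)) k.2) := by
  zify
  refine mul_left_cancel₀ two_ne_zero ?_
  simp only [mul_add, two_mul_natCast_thetaExp, dissectionRight]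
  push_cast
  ring

theorem phi_mul_psi (m : ℕ) [NeZero m] :
    phi R m * psi R (2 * m) = theta 1 m (4 * m) * theta 1 (2 * m) (3 * m)
      + X ^ m * (phi R (5 * m) * psi R (10 * m)) := by
  refine (hasSum_theta_mul_theta 1 1 m m (2 * m) (3 * (2 * m))).unique ?_
  refine hasSum_add_of_isCompl_range injective_dissectionLeft injective_dissectionRight
    isCompl_range_dissection ?_ ?_
  · refine (hasSum_theta_mul_theta (1 : Rˣ) 1 m (4 * m) (2 * m) (3 * m)).congr_fun fun k ↦ ?_
    simp only [Function.comp_apply, one_zpow, thetaExp_dissectionLeft]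
  · refine ((hasSum_theta_mul_theta (1 : Rˣ) 1 (5 * m) (5 * m) (10 * m)
      (3 * (10 * m))).mul_left (X ^ m)).congr_fun fun k ↦ ?_
    simp only [Function.comp_apply, one_zpow, mul_one, Units.val_one, map_one, one_mul,
      thetaExp_dissectionRight, ← pow_add]

end ThetaIdentities

section GeneratingFunction

variable {R : Type*} [CommRing R] [TopologicalSpace R]

theorem hasProd_ite_dvd (z : R) (m : ℕ) [NeZero m] :
    HasProd (fun i : ℕ ↦ if m ∣ i + 1 then 1 + C z * X ^ (i + 1) else 1)
      (progressionProd z m m) := by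
  have hpos : 0 < m := NeZero.pos m
  have hcancel (i : ℕ) : m * i + (m - 1) + 1 = m * i + m := by omega
  have hinj : (fun i ↦ m * i + (m - 1)).Injective := fun i j h ↦
    Nat.eq_of_mul_eq_mul_left hpos (Nat.add_right_cancel h)
  refine (hinj.hasProd_iff fun i hi ↦ if_neg ?_).mp ?_
  · rintro ⟨_ | j, hj⟩
    · omega
    · exact hi ⟨j, by rw [mul_add_one] at hj; dsimp only; omega⟩
  · refine (hasProd_progressionProd z m m).congr_fun fun i ↦ ?_
    rw [Function.comp_apply, hcancel, if_pos ⟨i + 1, rfl⟩]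

variable [T2Space R]

theorem hasProd_mk_card_distincts (P : ℕ → Prop) [DecidablePred P] :
    HasProd (fun i : ℕ ↦ if P (i + 1) then 1 + X ^ (i + 1) else 1)
      (PowerSeries.mk fun n ↦ (#{p ∈ Nat.Partition.distincts n | ∀ i ∈ p.parts, P i} : R)) := by
  have h := Nat.Partition.hasProd_genFun fun i c ↦ if c ≤ 1 ∧ P i then (1 : R) else 0
  convert! h using 1
  · funext i
    rw [tsum_eq_single 0 fun j hj ↦ by rw [if_neg (by omega), zero_smul]]
    by_cases hP : P (i + 1) <;> simp [hP]
  · ext n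
    rw [Nat.Partition.coeff_genFun, coeff_mk]
    simp_rw [Finsupp.prod, prod_boole]
    rw [Nat.Partition.distincts, filter_filter, card_filter, Nat.cast_sum]
    refine sum_congr rfl fun p _ ↦ ?_
    rw [Nat.cast_ite, Nat.cast_one, Nat.cast_zero]
    have hcount : p.parts.Nodup ↔ ∀ i ∈ p.parts, p.parts.count i ≤ 1 := by
      rw [Multiset.nodup_iff_count_eq_one]
      exact forall₂_congr fun i hi ↦ ⟨Eq.le, (le_antisymm · (Multiset.one_le_count_iff_mem.mpr hi))⟩
    refine if_congr ?_ rfl rfl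
    rw [hcount, ← forall₂_and]
    simp

variable (R) in
/-- The generating function of `b5'`, with coefficients in `R`. -/
noncomputable def b5'Series : R⟦X⟧ := PowerSeries.mk fun n ↦ (b5' n : R)

variable [IsTopologicalRing R]

theorem b5'Series_mul_progressionProd :
    b5'Series R * progressionProd 1 5 5 = progressionProd 1 1 1 := by
  refine ((hasProd_mk_card_distincts fun i ↦ ¬ 5 ∣ i).mul (hasProd_ite_dvd 1 5)).unique ?_
  refine (hasProd_progressionProd 1 1 1).congr_fun fun i ↦ ?_
  by_cases h : 5 ∣ i + 1 <;> simp [h]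

theorem b5'Series_mul_eulerProd_mul_eulerProd :
    b5'Series R * eulerProd R 1 * eulerProd R 10 = eulerProd R 2 * eulerProd R 5 := by
  have h1 := progressionProd_one_mul_eulerProd (R := R) 1
  have h5 := progressionProd_one_mul_eulerProd (R := R) 5
  rw [← b5'Series_mul_progressionProd] at h1
  linear_combination (eulerProd R 5) * h1 - (b5'Series R * eulerProd R 1) * h5

theorem b5'Series_eq_prod : b5'Series R = progressionProd 1 5 1 * progressionProd 1 5 2
    * progressionProd 1 5 3 * progressionProd 1 5 4 := by
  have hunit : IsUnit (progressionProd (1 : R) 5 5) := by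
    refine isUnit_of_mul_isUnit_left (y := eulerProd R 5) ?_
    rw [progressionProd_one_mul_eulerProd]
    exact isUnit_eulerProd (2 * 5)
  refine hunit.mul_right_cancel ?_
  rw [b5'Series_mul_progressionProd, progressionProd_eq_prod_residues 1 5 1 1]
  simp [prod_range_succ]

theorem b5'Series_mul_eulerProd_sq :
    b5'Series R * eulerProd R 5 ^ 2 = theta 1 1 4 * theta 1 2 3 := by
  rw [b5'Series_eq_prod, jacobi_triple_product, jacobi_triple_product, inv_one, Units.val_one]
  ring

end GeneratingFunction

section OddPart

variable {R : Type*} [CommRing R]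

/-- The series `∑ a_(2 n + 1) q ^ n` of the odd-indexed coefficients of `∑ a_n q ^ n`. -/
noncomputable def oddPart (F : R⟦X⟧) : R⟦X⟧ := PowerSeries.mk fun n ↦ coeff (2 * n + 1) F

theorem coeff_oddPart (F : R⟦X⟧) (n : ℕ) : coeff n (oddPart F) = coeff (2 * n + 1) F :=
  coeff_mk _ _

theorem oddPart_expand_add_X_mul_expand (A B : R⟦X⟧) :
    oddPart (expand 2 two_ne_zero A + X * expand 2 two_ne_zero B) = B := by
  ext n
  rw [coeff_oddPart, map_add, coeff_succ_X_mul, coeff_expand, coeff_expand, if_neg (by omega),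
    if_pos (dvd_mul_right 2 n), zero_add, Nat.mul_div_cancel_left n two_pos]

theorem exists_eq_expand_add_X_mul_expand_oddPart (F : R⟦X⟧) :
    ∃ A, F = expand 2 two_ne_zero A + X * expand 2 two_ne_zero (oddPart F) := by
  refine ⟨PowerSeries.mk fun n ↦ coeff (2 * n) F, ?_⟩
  ext n
  obtain ⟨m, rfl | rfl⟩ := n.even_or_odd'
  · have hodd : coeff (2 * m) (X * expand 2 two_ne_zero (oddPart F)) = 0 := by
      obtain _ | m := m
      · exact coeff_zero_X_mul _
      · rw [show 2 * (m + 1) = 2 * m + 1 + 1 by ring, coeff_succ_X_mul, coeff_expand,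
          if_neg (by omega)]
    rw [map_add, hodd, add_zero, coeff_expand, if_pos (dvd_mul_right 2 m), coeff_mk,
      Nat.mul_div_cancel_left m two_pos]
  · rw [map_add, coeff_succ_X_mul, coeff_expand, coeff_expand, if_neg (by omega),
      if_pos (dvd_mul_right 2 m), zero_add, Nat.mul_div_cancel_left m two_pos, coeff_oddPart]

theorem oddPart_mul_expand (F A : R⟦X⟧) :
    oddPart (F * expand 2 two_ne_zero A) = oddPart F * A := by
  obtain ⟨B, hB⟩ := exists_eq_expand_add_X_mul_expand_oddPart F
  have h : F * expand 2 two_ne_zero A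
      = expand 2 two_ne_zero (B * A) + X * expand 2 two_ne_zero (oddPart F * A) := by
    rw [map_mul, map_mul]
    linear_combination (expand 2 two_ne_zero A) * hB
  rw [h, oddPart_expand_add_X_mul_expand]

end OddPart

section ModFour

local notation "f" => eulerProd (ZMod 4)
local notation "φ" => phi (ZMod 4)
local notation "ψ" => psi (ZMod 4)
local notation "G" => b5'Series (ZMod 4)

theorem four_eq_zero : (4 : (ZMod 4)⟦X⟧) = 0 := by
  rw [← map_ofNat C 4, show (OfNat.ofNat 4 : ZMod 4) = 0 from rfl, map_zero]

theorem two_mul_phi (m : ℕ) [NeZero m] : 2 * φ m = 2 := by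
  obtain ⟨s, hs⟩ := exists_phi_add_one_eq_two_mul (ZMod 4) m
  linear_combination 2 * hs + (s - 1) * four_eq_zero

theorem phi_sq (m : ℕ) [NeZero m] : φ m ^ 2 = 1 := by
  obtain ⟨s, hs⟩ := exists_phi_add_one_eq_two_mul (ZMod 4) m
  linear_combination (φ m + 2 * s - 1) * hs + (s ^ 2 - s) * four_eq_zero

theorem phi_eq_phi_add_psi (m : ℕ) [NeZero m] :
    φ m = φ (4 * m) + 2 * (X ^ m * ψ (8 * m)) := by
  rw [phi, theta_eq_phi_add_psi (one_mul 1), Units.val_one, map_one, one_mul]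

theorem theta_neg_one_eq_phi (m : ℕ) [NeZero m] : theta (-1) m m = φ m := by
  rw [theta_eq_phi_add_psi (by rw [neg_one_mul, neg_neg]), phi_eq_phi_add_psi m, Units.val_neg,
    Units.val_one, map_neg, map_one]
  linear_combination (-(X ^ m * ψ (8 * m))) * four_eq_zero

theorem eulerProd_sq_eq_phi_mul (m : ℕ) [NeZero m] : f m ^ 2 = φ m * f (2 * m) := by
  rw [eulerProd_sq, theta_neg_one_eq_phi]

theorem two_mul_eulerProd_sq (m : ℕ) [NeZero m] : 2 * f m ^ 2 = 2 * f (2 * m) := by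
  rw [eulerProd_sq_eq_phi_mul, ← mul_assoc, two_mul_phi]

theorem two_mul_psi (m : ℕ) [NeZero m] : 2 * ψ m = 2 * (f m * f (2 * m)) := by
  apply (isUnit_eulerProd m).mul_right_cancel
  linear_combination 2 * psi_mul_eulerProd (ZMod 4) m - f (2 * m) * two_mul_eulerProd_sq m

theorem two_mul_theta_mul_theta :
    2 * (theta 1 1 4 * theta 1 2 3) = 2 * (f 1 * f 5) := by
  apply (isUnit_eulerProd 10).mul_right_cancel
  apply (isUnit_eulerProd 1).mul_right_cancel
  rw [← b5'Series_mul_eulerProd_sq]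
  linear_combination 2 * f 5 ^ 2 * b5'Series_mul_eulerProd_mul_eulerProd (R := ZMod 4)
    - f 5 ^ 3 * two_mul_eulerProd_sq 1 + f 1 ^ 2 * f 5 * two_mul_eulerProd_sq 5

theorem two_mul_eulerProd_mul_eulerProd (m : ℕ) [NeZero m] :
    2 * (f m * f (5 * m)) = 2 * (ψ (2 * m) + X ^ m * ψ (10 * m)) := by
  have h : 2 * (f 1 * f 5) = 2 * (ψ 2 + X * ψ 10) := by
    rw [← two_mul_theta_mul_theta]
    linear_combination -2 * phi_mul_psi (ZMod 4) 1 + ψ 2 * two_mul_phi 1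
      - X * ψ 10 * two_mul_phi 5 - X * ψ 10 * four_eq_zero
  have hexpand := congrArg (expand m (NeZero.ne m)) h
  simp only [map_mul, map_add, map_ofNat, expand_X, expand_eulerProd, expand_psi] at hexpand
  rwa [mul_one, mul_comm m 5, mul_comm m 2, mul_comm m 10] at hexpand

theorem b5'Series_mul_eulerProd_ten :
    G * f 10 = φ 1 * φ 5 * ψ 2 - X * ψ 10 := by
  have h : G * φ 5 * f 10 = theta 1 1 4 * theta 1 2 3 := by
    rw [← b5'Series_mul_eulerProd_sq, eulerProd_sq_eq_phi_mul, mul_assoc]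
  linear_combination (-(G * f 10) - X * ψ 10) * phi_sq 5 + φ 5 * h - φ 5 * phi_mul_psi (ZMod 4) 1

theorem oddPart_b5'Series_mul_eulerProd_five :
    oddPart G * f 5 = 2 * ((ψ 4 + X ^ 2 * ψ 20) * ψ 1) - ψ 5 := by
  have h : G * f 10 = expand 2 two_ne_zero (φ 2 * φ 10 * ψ 1)
      + X * expand 2 two_ne_zero (2 * ((ψ 4 + X ^ 2 * ψ 20) * ψ 1) - ψ 5) := by
    simp only [map_mul, map_add, map_sub, map_pow, map_ofNat, expand_X, expand_psi, expand_phi]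
    rw [b5'Series_mul_eulerProd_ten, phi_eq_phi_add_psi 1, phi_eq_phi_add_psi 5]
    linear_combination X ^ 6 * ψ 8 * ψ 40 * ψ 2 * four_eq_zero
      + X ^ 5 * ψ 40 * ψ 2 * two_mul_phi 4 + X * ψ 8 * ψ 2 * two_mul_phi 20
  rw [← oddPart_mul_expand, expand_eulerProd, h, oddPart_expand_add_X_mul_expand]

theorem oddPart_b5'Series : oddPart G = 2 * (f 2 ^ 2 * (f 1 * f 5)) - φ 5 * f 10 := by
  have h : oddPart G * φ 5 = 2 * (f 2 * ψ 1 * f 5) - f 10 := by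
    apply (isUnit_eulerProd 10).mul_right_cancel
    linear_combination f 5 * oddPart_b5'Series_mul_eulerProd_five
      - oddPart G * eulerProd_sq_eq_phi_mul 5 - ψ 1 * f 5 * two_mul_eulerProd_mul_eulerProd 2
      - psi_mul_eulerProd (ZMod 4) 5
  linear_combination -oddPart G * phi_sq 5 + φ 5 * h + f 2 * ψ 1 * f 5 * two_mul_phi 5
    + f 2 * f 5 * two_mul_psi 1

theorem oddPart_oddPart_b5'Series : oddPart (oddPart G) = 2 * (f 5 * ψ 4) := by
  have h : oddPart G = expand 2 two_ne_zero (2 * (f 1 ^ 2 * ψ 1) - φ 10 * f 5)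
      + X * expand 2 two_ne_zero (2 * (f 1 ^ 2 * ψ 5 - X ^ 2 * ψ 20 * f 5)) := by
    simp only [map_mul, map_sub, map_pow, map_ofNat, expand_X, expand_psi, expand_phi,
      expand_eulerProd]
    rw [oddPart_b5'Series, phi_eq_phi_add_psi 5]
    linear_combination f 2 ^ 2 * two_mul_eulerProd_mul_eulerProd 1
  rw [h, oddPart_expand_add_X_mul_expand]
  linear_combination f 1 ^ 2 * two_mul_psi 5 + f 5 * two_mul_eulerProd_mul_eulerProd 2
    + f 5 * f 10 * two_mul_eulerProd_sq 1

theorem natCast_b5'_four_mul_add_three (K : ℕ) :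
    (b5' (4 * K + 3) : ZMod 4) = 2 * coeff K (f 5 * ψ 4) := by
  have h := congrArg (coeff K) oddPart_oddPart_b5'Series
  rw [coeff_oddPart, coeff_oddPart, b5'Series, coeff_mk, ← map_ofNat C 2, coeff_C_mul] at h
  convert h using 3
  ring

end ModFour

section Quadratic

theorem exists_eq_twelve_mul_sq_add_five_mul_sq {K : ℕ}
    (h : coeff K (eulerProd (ZMod 4) 5 * psi (ZMod 4) 4) ≠ 0) :
    ∃ x y : ℤ, 24 * (K : ℤ) + 17 = 12 * x ^ 2 + 5 * y ^ 2 := by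
  rw [coeff_mul] at h
  obtain ⟨⟨a, b⟩, hab, hne⟩ := exists_ne_zero_of_sum_ne_zero h
  have ha := left_ne_zero_of_mul hne
  rw [eulerProd_eq_expand_pentagonalSeries, coeff_expand] at ha
  obtain ⟨ha5, ha⟩ := ite_ne_right_iff.mp ha
  obtain ⟨k, hk⟩ := not_imp_comm.mp (coeff_pentagonalSeries_eq_zero (ZMod 4)) ha
  obtain ⟨t, ht⟩ := exists_thetaExp_eq_of_coeff_theta_ne_zero 1 (right_ne_zero_of_mul hne)
  have hpentagonal := two_mul_natCast_pentagonal k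
  have htheta := two_mul_natCast_thetaExp 4 (3 * 4) t
  have hsum : (5 * pentagonal k + thetaExp 4 (3 * 4) t : ℤ) = K := by
    rw [← mem_antidiagonal.mp hab, ht, hk]
    push_cast
    rw [Int.mul_ediv_cancel' (by exact_mod_cast ha5)]
  refine ⟨4 * t - 1, 6 * k - 1, ?_⟩
  push_cast at htheta
  linear_combination -24 * hsum + 60 * hpentagonal + 12 * htheta

theorem eq_zero_of_sq_mul_eq_two_mul_sq :
    ∀ {c w x : ZMod 5}, c ^ 2 = 1 → w ^ 2 * c = 2 * x ^ 2 → w = 0 ∧ x = 0 := by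
  decide

theorem five_dvd_of_sq_mul_eq {c w x y : ℤ} (hc : (c : ZMod 5) ^ 2 = 1)
    (h : w ^ 2 * c = 12 * x ^ 2 + 5 * y ^ 2) : 5 ∣ w ∧ 5 ∣ x ∧ 5 ∣ y := by
  have hmod : (w : ZMod 5) ^ 2 * c = 2 * (x : ZMod 5) ^ 2 := by
    have hcast := congrArg (Int.cast : ℤ → ZMod 5) h
    push_cast at hcast
    rw [hcast]
    linear_combination (2 * (x : ZMod 5) ^ 2 + (y : ZMod 5) ^ 2) * ZMod.natCast_self 5
  obtain ⟨hw, hx⟩ := eq_zero_of_sq_mul_eq_two_mul_sq hc hmod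
  obtain ⟨w', rfl⟩ := (ZMod.intCast_zmod_eq_zero_iff_dvd w 5).mp hw
  obtain ⟨x', rfl⟩ := (ZMod.intCast_zmod_eq_zero_iff_dvd x 5).mp hx
  push_cast at h
  have hy : (5 : ℤ) ∣ y ^ 2 := ⟨w' ^ 2 * c - 12 * x' ^ 2, by linarith⟩
  have hprime : Prime (5 : ℤ) := Int.prime_ofNat_iff.mpr Nat.prime_five
  exact ⟨dvd_mul_right _ _, dvd_mul_right _ _, hprime.dvd_of_dvd_pow hy⟩

theorem sq_mul_ne_twelve_mul_sq_add_five_mul_sq {c : ℤ} (hc : (c : ZMod 5) ^ 2 = 1) {w : ℤ}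
    (hw : w ≠ 0) (x y : ℤ) : w ^ 2 * c ≠ 12 * x ^ 2 + 5 * y ^ 2 := by
  intro h
  induction hn : w.natAbs using Nat.strong_induction_on generalizing w x y with
  | _ n ih =>
    obtain ⟨⟨w', rfl⟩, ⟨x', rfl⟩, y', rfl⟩ := five_dvd_of_sq_mul_eq hc h
    exact ih w'.natAbs (by omega) (by omega) x' y' (by linarith) rfl

end Quadratic

theorem sq_mod_twenty_four_of_coprime_six {m : ℕ} (hm : m.Coprime 6) : m ^ 2 % 24 = 1 := by
  have h : ∀ u : (ZMod 24)ˣ, u ^ 2 = 1 := by decide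
  have hm' : m.Coprime 24 := (hm.pow_right 3).of_dvd_right (by norm_num)
  have h' := congrArg Units.val (h (ZMod.unitOfCoprime m hm'))
  rw [Units.val_pow_eq_pow_val, ZMod.coe_unitOfCoprime, Units.val_one] at h'
  exact (ZMod.natCast_eq_natCast_iff' (m ^ 2) 1 24).mp (by exact_mod_cast h')

theorem intCast_sq_eq_one_of_mem_one_three (n : ℕ) {j : ℕ} (hj : j ∈ ({1, 3} : Finset ℕ)) :
    ((24 * (5 * n + j) + 17 : ℤ) : ZMod 5) ^ 2 = 1 := by
  have hred : ((24 * (5 * n + j) + 17 : ℤ) : ZMod 5) = 2 - j := by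
    push_cast
    linear_combination (24 * (n : ZMod 5) + 5 * j + 3) * ZMod.natCast_self 5
  obtain rfl | rfl := (by simpa using hj : j = 1 ∨ j = 3) <;> rw [hred] <;> decide

theorem b5'_four_mul_add_three_modEq_zero {K : ℕ}
    (h : ∀ x y : ℤ, 24 * (K : ℤ) + 17 ≠ 12 * x ^ 2 + 5 * y ^ 2) : b5' (4 * K + 3) ≡ 0 [MOD 4] := by
  have hcoeff : coeff K (eulerProd (ZMod 4) 5 * psi (ZMod 4) 4) = 0 := by
    contrapose! h
    exact exists_eq_twelve_mul_sq_add_five_mul_sq h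
  rw [← ZMod.natCast_eq_natCast_iff, natCast_b5'_four_mul_add_three, hcoeff, mul_zero,
    Nat.cast_zero]

end QSeries

theorem b5'_even_power_family_general {m : ℕ} (hm : m.Coprime 6) (n : ℕ) {j : ℕ}
    (hj : j ∈ ({1, 3} : Finset ℕ)) :
    b5' (4 * m ^ 2 * (5 * n + j) + (17 * m ^ 2 + 1) / 6) ≡ 0 [MOD 4] := by
  obtain ⟨r, hr⟩ : ∃ r, m ^ 2 = 24 * r + 1 :=
    ⟨m ^ 2 / 24, by have := QSeries.sq_mod_twenty_four_of_coprime_six hm; omega⟩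
  have hindex : 4 * m ^ 2 * (5 * n + j) + (17 * m ^ 2 + 1) / 6
      = 4 * (m ^ 2 * (5 * n + j) + 17 * r) + 3 := by
    rw [mul_assoc]
    omega
  have hm0 : (m : ℤ) ≠ 0 := by
    intro h
    simp [Nat.cast_eq_zero.mp h] at hm
  rw [hindex]
  refine QSeries.b5'_four_mul_add_three_modEq_zero fun x y hxy ↦
    QSeries.sq_mul_ne_twelve_mul_sq_add_five_mul_sq
      (QSeries.intCast_sq_eq_one_of_mem_one_three n hj) hm0 x y (hxy ▸ ?_)
  zify at hr
  push_cast
  linear_combination 17 * hr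

theorem b5'_even_power_family (p : ℕ) [Fact p.Prime] (hp : 5 ≤ p)
    (hleg : legendreSym p 3 ≠ legendreSym p (-5)) :
    ∀ n α : ℕ, ∀ j ∈ ({1, 3} : Finset ℕ),
      b5' (4 * p ^ (2 * α) * (5 * n + j) + (17 * p ^ (2 * α) + 1) / 6) ≡ 0 [MOD 4] := by
  intro n α j hj
  have htwo : p.Coprime 2 := (Nat.coprime_primes Fact.out Nat.prime_two).mpr (by omega)
  have hthree : p.Coprime 3 := (Nat.coprime_primes Fact.out Nat.prime_three).mpr (by omega)
  rw [mul_comm 2 α, pow_mul]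
  exact b5'_even_power_family_general ((htwo.mul_right hthree).pow_left α) n hj
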